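/- For every set S of n points in the plane in convex position and any two trees T, T' ∈ 𝒯(S), the tree T can be transformed into T' by a sequence of at most 2n − 5 edge slides. -/

import Mathlib

open scoped Classical

noncomputable section

/-- Points in the plane. -/
abbrev Pt : Type := ℝ × ℝ

/-- The closed straight-line segment spanned by an (unordered) edge. -/
def segOf (e : Sym2 Pt) : Set Pt :=
  Sym2.lift ⟨fun p q => segment ℝ p q, fun p q => segment_symm ℝ p q⟩ e

/-- The set of endpoints of an edge. -/
def epts (e : Sym2 Pt) : Set Pt := {p | p ∈ e}

/-- Two edges intersect in at most common endpoints (they do not cross). -/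
def NoCrossPair (e f : Sym2 Pt) : Prop := segOf e ∩ segOf f ⊆ epts e ∩ epts f

/-- A set of edges is noncrossing: any two distinct edges meet in at most a common endpoint. -/
def NoCross (E : Finset (Sym2 Pt)) : Prop := ∀ e ∈ E, ∀ f ∈ E, e ≠ f → NoCrossPair e f

/-- `E` is the edge set of a noncrossing straight-line spanning tree on the point set `S`:
all edges are nondegenerate with endpoints in `S`, pairwise noncrossing, there are
`|S| - 1` of them, and they connect all of `S`. -/
def IsPST (S : Finset Pt) (E : Finset (Sym2 Pt)) : Prop :=
  (∀ e ∈ E, ¬ e.IsDiag ∧ ∀ p ∈ e, p ∈ S) ∧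
  NoCross E ∧ E.card + 1 = S.card ∧
  ∀ p ∈ S, ∀ q ∈ S, Relation.ReflTransGen (fun a b => s(a, b) ∈ E) p q

/-- `S` is in general position: no three of its points are collinear. -/
def GenPos (S : Finset Pt) : Prop :=
  ∀ p ∈ S, ∀ q ∈ S, ∀ r ∈ S, p ≠ q → p ≠ r → q ≠ r → ¬ Collinear ℝ ({p, q, r} : Set Pt)

/-- `S` is in convex position: every point of `S` is a vertex of the convex hull of `S`. -/
def ConvexPos (S : Finset Pt) : Prop :=
  ∀ p ∈ S, p ∉ convexHull ℝ ((S : Set Pt) \ {p})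

/-- The open interior of the triangle with vertices `p`, `q`, `r`. -/
def triInt (p q r : Pt) : Set Pt := interior (convexHull ℝ ({p, q, r} : Set Pt))

/-- `y` can be reached from `x` by a sequence of at most `m` `step`-operations. -/
def ReachesIn {α : Type*} (step : α → α → Prop) (m : ℕ) (x y : α) : Prop :=
  ∃ k ≤ m, ∃ f : ℕ → α, f 0 = x ∧ f k = y ∧ ∀ i < k, step (f i) (f (i + 1))

/-- A simultaneous rotation from `E₁` to `E₂`: a bijection `π` between the removed and the
inserted edges such that each `e` shares an endpoint with `π e` and `π e` crosses no edge
of `E₁`. -/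
def SimRotation (S : Finset Pt) (E₁ E₂ : Finset (Sym2 Pt)) : Prop :=
  IsPST S E₁ ∧ IsPST S E₂ ∧ ∃ π : Sym2 Pt → Sym2 Pt,
    Set.BijOn π ↑(E₁ \ E₂) ↑(E₂ \ E₁) ∧
    ∀ e ∈ E₁ \ E₂, (∃ p, p ∈ e ∧ p ∈ π e) ∧ ∀ f ∈ E₁, NoCrossPair (π e) f

/-- An empty-triangle rotation replaces an edge `pq` by an adjacent edge `pr` such that
no edge of either tree meets the interior of the triangle `pqr`. -/
def EmptyTriRot (S : Finset Pt) (E₁ E₂ : Finset (Sym2 Pt)) : Prop :=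
  IsPST S E₁ ∧ IsPST S E₂ ∧ ∃ p q r : Pt,
    E₁ \ E₂ = {s(p, q)} ∧ E₂ \ E₁ = {s(p, r)} ∧
    ∀ g ∈ E₁ ∪ E₂, Disjoint (segOf g) (triInt p q r)

/-- A simultaneous empty-triangle rotation. -/
def SimEmptyTriRot (S : Finset Pt) (E₁ E₂ : Finset (Sym2 Pt)) : Prop :=
  IsPST S E₁ ∧ IsPST S E₂ ∧ ∃ π : Sym2 Pt → Sym2 Pt,
    Set.BijOn π ↑(E₁ \ E₂) ↑(E₂ \ E₁) ∧
    ∀ e ∈ E₁ \ E₂, ∃ p q r : Pt, e = s(p, q) ∧ π e = s(p, r) ∧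
      ∀ g ∈ E₁ ∪ E₂, Disjoint (segOf g) (triInt p q r)

/-- An edge slide replaces `pq` by `pr`, where `qr` is an edge of both trees and no edge of
either tree meets the interior of the triangle `pqr`. -/
def EdgeSlide (S : Finset Pt) (E₁ E₂ : Finset (Sym2 Pt)) : Prop :=
  IsPST S E₁ ∧ IsPST S E₂ ∧ ∃ p q r : Pt,
    E₁ \ E₂ = {s(p, q)} ∧ E₂ \ E₁ = {s(p, r)} ∧
    s(q, r) ∈ E₁ ∧ s(q, r) ∈ E₂ ∧
    ∀ g ∈ E₁ ∪ E₂, Disjoint (segOf g) (triInt p q r)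

/-- A simultaneous edge slide. -/
def SimEdgeSlide (S : Finset Pt) (E₁ E₂ : Finset (Sym2 Pt)) : Prop :=
  IsPST S E₁ ∧ IsPST S E₂ ∧ ∃ π : Sym2 Pt → Sym2 Pt,
    Set.BijOn π ↑(E₁ \ E₂) ↑(E₂ \ E₁) ∧
    ∀ e ∈ E₁ \ E₂, ∃ p q r : Pt, e = s(p, q) ∧ π e = s(p, r) ∧
      s(q, r) ∈ E₁ ∧ s(q, r) ∈ E₂ ∧
      ∀ g ∈ E₁ ∪ E₂, Disjoint (segOf g) (triInt p q r)

/-- `e` is an edge of the convex hull of `S`: it joins two distinct points of `S` and its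
segment lies on the boundary of the convex hull of `S`. -/
def IsHullEdge (S : Finset Pt) (e : Sym2 Pt) : Prop :=
  ∃ u v : Pt, e = s(u, v) ∧ u ∈ S ∧ v ∈ S ∧ u ≠ v ∧
    segment ℝ u v ⊆ frontier (convexHull ℝ (S : Set Pt))

/-- The spanning star centered at `v`. -/
def starAt (S : Finset Pt) (v : Pt) : Finset (Sym2 Pt) := (S.erase v).image (fun w => s(v, w))

/-- An edge-labeled tree: an edge set together with a labeling function. -/
abbrev LTree := Finset (Sym2 Pt) × (Sym2 Pt → ℕ)

/-- `T` is an edge-labeled noncrossing straight-line spanning tree on `S`: its edge set is in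
`𝒯(S)` and its labeling is a bijection from the edges onto `{1, …, |S| - 1}`
(normalized to `0` on non-edges). -/
def IsLabeledPST (S : Finset Pt) (T : LTree) : Prop :=
  IsPST S T.1 ∧ Set.BijOn T.2 ↑T.1 (Set.Icc 1 (S.card - 1)) ∧ ∀ e, e ∉ T.1 → T.2 e = 0

/-- A simultaneous exchange on edge-labeled trees: an arbitrary bijection between removed and
inserted edges transferring labels, all common edges keeping their labels. -/
def LabSimExchange (S : Finset Pt) (T₁ T₂ : LTree) : Prop :=
  IsLabeledPST S T₁ ∧ IsLabeledPST S T₂ ∧ ∃ π : Sym2 Pt → Sym2 Pt,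
    Set.BijOn π ↑(T₁.1 \ T₂.1) ↑(T₂.1 \ T₁.1) ∧
    (∀ e ∈ T₁.1 \ T₂.1, T₂.2 (π e) = T₁.2 e) ∧
    ∀ e ∈ T₁.1 ∩ T₂.1, T₂.2 e = T₁.2 e

/-- A rotation on edge-labeled trees: the removed and inserted edges share an endpoint and do
not cross, the label of the removed edge is transferred, and all other labels are kept. -/
def LabRotation (S : Finset Pt) (T₁ T₂ : LTree) : Prop :=
  IsLabeledPST S T₁ ∧ IsLabeledPST S T₂ ∧ ∃ e₁ e₂ : Sym2 Pt,
    T₁.1 \ T₂.1 = {e₁} ∧ T₂.1 \ T₁.1 = {e₂} ∧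
    (∃ p, p ∈ e₁ ∧ p ∈ e₂) ∧ NoCrossPair e₁ e₂ ∧
    T₂.2 e₂ = T₁.2 e₁ ∧ ∀ e ∈ T₁.1 ∩ T₂.1, T₂.2 e = T₁.2 e

/-- An edge slide on edge-labeled trees, transferring the label of the slid edge. -/
def LabEdgeSlide (S : Finset Pt) (T₁ T₂ : LTree) : Prop :=
  IsLabeledPST S T₁ ∧ IsLabeledPST S T₂ ∧ ∃ p q r : Pt,
    T₁.1 \ T₂.1 = {s(p, q)} ∧ T₂.1 \ T₁.1 = {s(p, r)} ∧
    s(q, r) ∈ T₁.1 ∧ s(q, r) ∈ T₂.1 ∧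
    (∀ g ∈ T₁.1 ∪ T₂.1, Disjoint (segOf g) (triInt p q r)) ∧
    T₂.2 (s(p, r)) = T₁.2 (s(p, q)) ∧ ∀ e ∈ T₁.1 ∩ T₂.1, T₂.2 e = T₁.2 e

/-!
A tree is slid into a star with centre `v`, each slide trading one edge not incident to `v` for
an edge at `v`, so the number of slides is the number of edges that `v` does not meet. As long
as the tree is not the star, some neighbour `q` of `v` has a further neighbour. Choose such a
neighbour `p` for which the angle `vqp` is smallest and slide `pq` to `pv`. In convex position
every other point lies beyond exactly one side of the triangle `vqp`. An edge starting beyond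
`vq` or `qp` cannot enter the triangle, as it would cross that edge of the tree; an edge
starting beyond `vp` can only enter it by ending at `q`, against the choice of `p`.

Slides are reversible, so two trees are joined through a common star. An edge is missed by
`n - 2` of the `n` points, hence averaging over `v` gives a centre missed by at most
`2 (n - 1) (n - 2) / n` edges of the two trees together.
-/

namespace ReachesIn

variable {α : Type*} {step : α → α → Prop} {m m' : ℕ} {x y z : α}

lemma refl (m : ℕ) (x : α) : ReachesIn step m x x :=
  ⟨0, m.zero_le, fun _ => x, rfl, rfl, fun _ hi => absurd hi (Nat.not_lt_zero _)⟩

lemma mono (hm : m ≤ m') (h : ReachesIn step m x y) : ReachesIn step m' x y :=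
  let ⟨k, hk, hf⟩ := h
  ⟨k, hk.trans hm, hf⟩

lemma head (hxy : step x y) (hyz : ReachesIn step m y z) : ReachesIn step (m + 1) x z := by
  obtain ⟨k, hk, f, rfl, rfl, hf⟩ := hyz
  refine ⟨k + 1, by omega, fun i => Nat.casesOn i x f, rfl, rfl, fun i hi => ?_⟩
  cases i with
  | zero => exact hxy
  | succ j => exact hf j (by omega)

lemma trans (hxy : ReachesIn step m x y) (hyz : ReachesIn step m' y z) :
    ReachesIn step (m + m') x z := by
  obtain ⟨k, hk, f, rfl, rfl, hf⟩ := hxy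
  suffices h : ∀ i ≤ k, ReachesIn step (i + m') (f (k - i)) z by
    simpa using (h k le_rfl).mono (Nat.add_le_add_right hk m')
  intro i
  induction i with
  | zero => simpa using hyz
  | succ i ih =>
    intro hi
    have hstep : step (f (k - (i + 1))) (f (k - i)) := by
      simpa [show k - (i + 1) + 1 = k - i by omega] using hf (k - (i + 1)) (by omega)
    exact (head hstep (ih (by omega))).mono (by omega)

lemma symm (hstep : ∀ x y, step x y → step y x) (h : ReachesIn step m x y) :
    ReachesIn step m y x := by
  obtain ⟨k, hk, f, rfl, rfl, hf⟩ := h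
  refine ⟨k, hk, fun i => f (k - i), by simp, by simp, fun i hi => hstep _ _ ?_⟩
  simpa [show k - (i + 1) + 1 = k - i by omega] using hf (k - (i + 1)) (by omega)

end ReachesIn

section Graph

variable {V : Type*} {S : Finset V} {E F : Finset (Sym2 V)} {v w p q r : V}

lemma exists_rel_rel_ne_of_not_rel {R : V → V → Prop} (h : Relation.ReflTransGen R v w)
    (hwv : w ≠ v) (hvw : ¬ R v w) : ∃ q p, R v q ∧ R q p ∧ p ≠ v := by
  by_contra! hreturn
  have hball : ∀ u, Relation.ReflTransGen R v u → u = v ∨ R v u := by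
    intro u hu
    induction hu with
    | refl => exact Or.inl rfl
    | tail _ hbc ih =>
      rcases ih with rfl | hvb
      · exact Or.inr hbc
      · exact Or.inl (hreturn _ _ hvb hbc)
  exact (hball w h).elim hwv hvw

/-- The edge set `E` connects any two points of `S`: the connectivity clause of `IsPST`. -/
def Spans (S : Finset V) (E : Finset (Sym2 V)) : Prop :=
  ∀ p ∈ S, ∀ q ∈ S, Relation.ReflTransGen (fun a b => s(a, b) ∈ E) p q

lemma Spans.connected_induce (h : Spans S E) (hE : ∀ e ∈ E, ∀ p ∈ e, p ∈ S) (hS : S.Nonempty) :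
    ((SimpleGraph.fromEdgeSet (E : Set (Sym2 V))).induce S).Connected := by
  have : Nonempty (S : Set V) := hS.to_subtype
  refine ⟨fun ⟨a, ha⟩ ⟨b, hb⟩ => ?_⟩
  have hab := h a ha b hb
  induction hab with
  | refl => exact .refl _
  | @tail c d _ hcd ih =>
    have hc : c ∈ S := hE _ hcd c (Sym2.mem_mk_left c d)
    refine (ih hc).trans ?_
    by_cases hne : c = d
    · subst hne
      exact .refl _
    · exact SimpleGraph.Adj.reachable (by simpa [hne] using hcd)

lemma Spans.card_le_card_add_one (h : Spans S E) (hE : ∀ e ∈ E, ∀ p ∈ e, p ∈ S) :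
    S.card ≤ E.card + 1 := by
  rcases S.eq_empty_or_nonempty with rfl | hS
  · simp
  set G := SimpleGraph.fromEdgeSet (E : Set (Sym2 V)) with hG
  have hGE : Nat.card G.edgeSet ≤ E.card := by
    rw [hG, SimpleGraph.edgeSet_fromEdgeSet, Nat.card_coe_set_eq, ← Set.ncard_coe_finset]
    exact Set.ncard_le_ncard Set.sdiff_subset
  have hedges : Nat.card (G.induce (S : Set V)).edgeSet ≤ Nat.card G.edgeSet := by
    have : Finite G.edgeSet := by
      rw [hG, SimpleGraph.edgeSet_fromEdgeSet]
      exact (E.finite_toSet.subset Set.sdiff_subset).to_subtype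
    exact Nat.card_le_card_of_injective _
      (SimpleGraph.Embedding.mapEdgeSet (.induce (S : Set V))).injective
  have hconn : (G.induce (S : Set V)).Connected := h.connected_induce hE hS
  have hverts := hconn.card_vert_le_card_edgeSet_add_one
  rw [Nat.card_coe_set_eq, Set.ncard_coe_finset] at hverts
  omega

variable [DecidableEq V]

lemma Spans.of_erase_subset (h : Spans S E) (hpr : s(p, r) ∈ F) (hqr : s(q, r) ∈ F)
    (hEF : E.erase s(p, q) ⊆ F) : Spans S F := by
  refine fun a ha b hb => Relation.reflTransGen_closed (fun x y hxy => ?_) a b (h a ha b hb)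
  by_cases hpq : s(x, y) = s(p, q)
  · rcases Sym2.eq_iff.1 hpq with ⟨rfl, rfl⟩ | ⟨rfl, rfl⟩
    · exact (Relation.ReflTransGen.single hpr).tail (Sym2.eq_swap ▸ hqr)
    · exact (Relation.ReflTransGen.single hqr).tail (Sym2.eq_swap ▸ hpr)
  · exact .single (hEF (Finset.mem_erase.2 ⟨hpq, hxy⟩))

/-- The number of edges of `E` not incident to `v`. For a tree it is the number of slides
that turn the tree into the star at `v`. -/
def nonincidentCount (E : Finset (Sym2 V)) (v : V) : ℕ := (E.filter (v ∉ ·)).card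

lemma sum_nonincidentCount (hE : ∀ e ∈ E, ¬ e.IsDiag ∧ ∀ p ∈ e, p ∈ S) :
    ∑ v ∈ S, nonincidentCount E v = E.card * (S.card - 2) := by
  have hedge : ∀ e ∈ E, (S.filter (· ∉ e)).card = S.card - 2 := by
    intro e he
    have hsub : e.toFinset ⊆ S := fun p hp => (hE e he).2 p (Sym2.mem_toFinset.1 hp)
    rw [← Sym2.card_toFinset_of_not_isDiag e (hE e he).1, ← Finset.card_sdiff_of_subset hsub]
    congr 1
    ext p
    simp
  calc ∑ v ∈ S, nonincidentCount E v = ∑ e ∈ E, (S.filter (· ∉ e)).card :=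
        Finset.sum_card_bipartiteAbove_eq_sum_card_bipartiteBelow (fun v e => v ∉ e)
    _ = E.card * (S.card - 2) := by rw [Finset.sum_congr rfl hedge, Finset.sum_const, smul_eq_mul]

/-- The edge set obtained from `E` by sliding the edge `pq` to `pr`. -/
def slide (E : Finset (Sym2 V)) (p q r : V) : Finset (Sym2 V) := insert s(p, r) (E.erase s(p, q))

lemma sdiff_slide (hpq : s(p, q) ∈ E) (hqr : q ≠ r) : E \ slide E p q r = {s(p, q)} := by
  have hne : s(p, q) ≠ s(p, r) := fun h => hqr (Sym2.congr_right.1 h)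
  ext e
  simp only [slide, Finset.mem_sdiff, Finset.mem_insert, Finset.mem_erase, Finset.mem_singleton]
  grind

lemma slide_sdiff (hpr : s(p, r) ∉ E) : slide E p q r \ E = {s(p, r)} := by
  ext e
  simp only [slide, Finset.mem_sdiff, Finset.mem_insert, Finset.mem_erase, Finset.mem_singleton]
  grind

lemma mem_slide_of_mem (hqr : s(q, r) ∈ E) (hpr : p ≠ r) : s(q, r) ∈ slide E p q r := by
  refine Finset.mem_insert_of_mem (Finset.mem_erase.2 ⟨fun h => hpr ?_, hqr⟩)
  rw [Sym2.eq_swap (a := p)] at h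
  exact (Sym2.congr_right.1 h).symm

lemma Spans.slide (h : Spans S E) (hqr : s(q, r) ∈ E) (hpr : p ≠ r) :
    Spans S (slide E p q r) :=
  h.of_erase_subset (Finset.mem_insert_self _ _) (mem_slide_of_mem hqr hpr)
    (Finset.subset_insert _ _)

lemma nonincidentCount_slide_add_one (hpq : s(p, q) ∈ E) (hpr : p ≠ r) (hqr : q ≠ r) :
    nonincidentCount (slide E p q r) r + 1 = nonincidentCount E r := by
  have hmem : s(p, q) ∈ E.filter (r ∉ ·) :=
    Finset.mem_filter.2 ⟨hpq, by simp [hpr.symm, hqr.symm]⟩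
  rw [nonincidentCount, _root_.slide, Finset.filter_insert, if_neg (by simp), Finset.filter_erase,
    Finset.card_erase_add_one hmem, nonincidentCount]

end Graph

section Simplex

variable {ι X : Type*} [AddCommGroup X] [Module ℝ X] (b : AffineBasis ι ℝ X) {i j k : ι}
  {x z : X}

/-- The points strictly separated from the simplex spanned by `b` by the facet opposite to
`b i`, and by no other facet. -/
def beyondFacet (i : ι) : Set X := {x | b.coord i x < 0 ∧ ∀ j ≠ i, 0 < b.coord j x}

lemma coord_eq_zero_of_mem_segment (hki : k ≠ i) (hkj : k ≠ j)
    (hz : z ∈ segment ℝ (b i) (b j)) : b.coord k z = 0 := by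
  obtain ⟨s, t, -, -, hst, rfl⟩ := hz
  simp [Convex.combo_affine_apply hst, b.coord_apply, hki, hkj]

lemma exists_mem_segment_coord_eq_zero (hx : x ∈ beyondFacet b i) (hzi : 0 < b.coord i z)
    (hz : ∀ j ≠ i, 0 ≤ b.coord j z) :
    ∃ u ∈ segment ℝ x z, b.coord i u = 0 ∧ ∀ j ≠ i, 0 < b.coord j u := by
  obtain ⟨hxi, hxj⟩ := hx
  have hd : 0 < b.coord i z - b.coord i x := by linarith
  have hs : 0 < b.coord i z / (b.coord i z - b.coord i x) := div_pos hzi hd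
  have ht : 0 < -b.coord i x / (b.coord i z - b.coord i x) := div_pos (by linarith) hd
  have hst : b.coord i z / (b.coord i z - b.coord i x) +
      -b.coord i x / (b.coord i z - b.coord i x) = 1 := by field_simp; ring
  refine ⟨_, ⟨_, _, hs.le, ht.le, hst, rfl⟩, ?_, fun j hj => ?_⟩ <;>
    rw [Convex.combo_affine_apply hst, smul_eq_mul, smul_eq_mul]
  · field_simp
    ring
  · exact add_pos_of_pos_of_nonneg (mul_pos hs (hxj j hj)) (mul_nonneg ht.le (hz j hj))

lemma exists_coord_neg_of_notMem_convexHull (hx : x ∉ convexHull ℝ (Set.range b)) :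
    ∃ i, b.coord i x < 0 := by
  simpa [b.convexHull_eq_nonneg_coord] using hx

lemma affineMap_apply_eq_sum_coord [Fintype ι] (f : X →ᵃ[ℝ] ℝ) (x : X) :
    f x = ∑ i, b.coord i x * f (b i) := by
  have hsum := b.sum_coord_apply_eq_one x
  conv_lhs => rw [← b.affineCombination_coord_eq_self x]
  rw [Finset.map_affineCombination _ _ _ hsum,
    Finset.affineCombination_eq_linear_combination _ _ _ hsum]
  rfl

lemma mem_convexHull_range_update [Fintype ι] [DecidableEq ι] {y : ι → X} {c : ι → ℝ}
    (hc : ∑ j, c j = 1) (hle : ∀ j ≠ i, c j ≤ 0) :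
    y i ∈ convexHull ℝ (Set.range (Function.update y i (∑ j, c j • y j))) := by
  set x := ∑ j, c j • y j with hx
  rw [← Finset.add_sum_erase _ _ (Finset.mem_univ i)] at hc hx
  have hpos : 0 < c i := by
    have hrest : ∑ j ∈ Finset.univ.erase i, c j ≤ 0 :=
      Finset.sum_nonpos fun j hj => hle j (Finset.ne_of_mem_erase hj)
    linarith
  let w : ι → ℝ := Function.update (-c) i 1
  have hwi : w i = 1 := Function.update_self ..
  have hwj : ∀ j ≠ i, w j = -c j := fun j hj => Function.update_of_ne hj ..
  have hw_nonneg : ∀ j ∈ Finset.univ, 0 ≤ w j := by grind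
  have hw_sum : ∑ j, w j = c i := by
    rw [← Finset.add_sum_erase _ _ (Finset.mem_univ i), hwi,
      Finset.sum_congr rfl fun j hj => hwj j (Finset.ne_of_mem_erase hj), Finset.sum_neg_distrib]
    linarith
  have hw_comb : ∑ j, w j • Function.update y i x j = c i • y i := by
    have hterm : ∀ j ∈ Finset.univ.erase i, w j • Function.update y i x j = -(c j • y j) := by
      intro j hj
      have hji := Finset.ne_of_mem_erase hj
      rw [hwj j hji, Function.update_of_ne hji, neg_smul]
    rw [← Finset.add_sum_erase _ _ (Finset.mem_univ i), hwi, Function.update_self, one_smul,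
      Finset.sum_congr rfl hterm, Finset.sum_neg_distrib, ← sub_eq_add_neg,
      eq_sub_of_add_eq hx.symm]
  -- `x = ∑ j, c j • y j`, solved for `y i`.
  have hyi : Finset.univ.centerMass w (Function.update y i x) = y i := by
    rw [Finset.centerMass, hw_sum, hw_comb, inv_smul_smul₀ hpos.ne']
  exact hyi ▸ Finset.univ.centerMass_mem_convexHull hw_nonneg (hw_sum ▸ hpos)
    fun j _ => Set.mem_range_self j

lemma exists_coord_pos_of_notMem_convexHull_update [Finite ι] [DecidableEq ι]
    (hi : b i ∉ convexHull ℝ (Set.range (Function.update b i x))) :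
    ∃ j ≠ i, 0 < b.coord j x := by
  have := Fintype.ofFinite ι
  by_contra! hle
  have hmem := mem_convexHull_range_update (y := b) (b.sum_coord_apply_eq_one x) hle
  rw [b.linear_combination_coord_eq_self] at hmem
  exact hi hmem

end Simplex

namespace ConvexPos

variable {S : Finset Pt} {v q p x : Pt}

lemma mem_of_mem_convexHull (hS : ConvexPos S) (hx : x ∈ S) {t : Set Pt} (ht : t ⊆ S)
    (h : x ∈ convexHull ℝ t) : x ∈ t :=
  convexIndependent_set_iff_inter_convexHull_subset.1
    (convexIndependent_set_iff_notMem_convexHull_sdiff.2 hS) t ht ⟨hx, h⟩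

lemma mem_of_mem_segOf (hS : ConvexPos S) (hx : x ∈ S) {e : Sym2 Pt} (he : ∀ p ∈ e, p ∈ S)
    (h : x ∈ segOf e) : x ∈ e := by
  induction e with
  | _ y z =>
    have hsub : ({y, z} : Set Pt) ⊆ S := Set.pair_subset (he y (by simp)) (he z (by simp))
    have hhull : x ∈ convexHull ℝ {y, z} := by rwa [convexHull_pair]
    simpa using hS.mem_of_mem_convexHull hx hsub hhull

lemma affineIndependent (hS : ConvexPos S) (hv : v ∈ S) (hq : q ∈ S) (hp : p ∈ S)
    (hvq : v ≠ q) (hvp : v ≠ p) (hqp : q ≠ p) : AffineIndependent ℝ ![v, q, p] := by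
  have hbetween : ∀ {x y z : Pt}, x ∈ S → y ∈ S → z ∈ S → Wbtw ℝ x y z → y = x ∨ y = z := by
    intro x y z hx hy hz h
    have hmem := hS.mem_of_mem_segOf hy (e := s(x, z)) (by simp [hx, hz])
      (mem_segment_iff_wbtw.2 h)
    simpa using hmem
  rw [affineIndependent_iff_not_collinear_set]
  intro hcol
  rcases hcol.wbtw_or_wbtw_or_wbtw with h | h | h
  · have := hbetween hv hq hp h
    tauto
  · have := hbetween hq hp hv h
    tauto
  · have := hbetween hp hv hq h
    tauto

lemma exists_mem_beyondFacet (hS : ConvexPos S) {b : AffineBasis (Fin 3) ℝ Pt}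
    (hb : ∀ i, b i ∈ S) (hx : x ∈ S) (hxb : ∀ i, x ≠ b i) : ∃ i, x ∈ beyondFacet b i := by
  obtain ⟨i, hi⟩ : ∃ i, b.coord i x < 0 := by
    refine exists_coord_neg_of_notMem_convexHull b fun h => ?_
    obtain ⟨i, rfl⟩ := hS.mem_of_mem_convexHull hx (Set.range_subset_iff.2 hb) h
    exact hxb i rfl
  have hpos : ∀ k, ∃ j ≠ k, 0 < b.coord j x := by
    refine fun k => exists_coord_pos_of_notMem_convexHull_update b fun h => ?_
    have hsub : Set.range (Function.update b k x) ⊆ S := by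
      rintro - ⟨j, rfl⟩
      rw [Function.update_apply]
      split_ifs
      exacts [hx, hb j]
    obtain ⟨j, hj⟩ := hS.mem_of_mem_convexHull (hb k) hsub h
    rw [Function.update_apply] at hj
    split_ifs at hj with hjk
    exacts [hxb k hj, hjk (b.ind.injective hj)]
  refine ⟨i, hi, fun j hji => ?_⟩
  obtain ⟨k, hki, hkj⟩ := (by decide : ∀ i j : Fin 3, ∃ k, k ≠ i ∧ k ≠ j) i j
  obtain ⟨l, hlk, hl⟩ := hpos k
  have hli : l ≠ i := by rintro rfl; exact hl.not_gt hi
  obtain rfl : l = j := by omega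
  exact hl

end ConvexPos

section Triangle

variable {v q x y z : Pt} {b : AffineBasis (Fin 3) ℝ Pt}

/-- Three affinely independent points of the plane as an affine basis, giving access to the
barycentric coordinates with respect to the triangle `vqp`. -/
def triangleBasis {p : Pt} (h : AffineIndependent ℝ ![v, q, p]) : AffineBasis (Fin 3) ℝ Pt where
  toFun := ![v, q, p]
  ind' := h
  tot' := h.affineSpan_eq_top_iff_card_eq_finrank_add_one.2 (by simp)

lemma exists_affineBasis_disjoint_beyondFacet {N : Finset Pt} (hN : N.Nonempty)
    (hind : ∀ x ∈ N, AffineIndependent ℝ ![v, q, x]) :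
    ∃ b : AffineBasis (Fin 3) ℝ Pt, b 0 = v ∧ b 1 = q ∧ b 2 ∈ N ∧
      ∀ x ∈ N, x ∉ beyondFacet b 1 := by
  obtain ⟨p₀, hp₀⟩ := hN
  let b₀ := triangleBasis (hind p₀ hp₀)
  -- The ratio is an affine substitute for the cotangent of the angle at `q` between `v` and `x`.
  obtain ⟨p, hp, hmax⟩ := N.exists_max_image (fun x => b₀.coord 0 x / |b₀.coord 2 x|) ⟨p₀, hp₀⟩
  let b := triangleBasis (hind p hp)
  have hb₀v : ∀ i, b₀.coord i v = if i = 0 then 1 else 0 := fun i => b₀.coord_apply i 0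
  have hb₀q : ∀ i, b₀.coord i q = if i = 1 then 1 else 0 := fun i => b₀.coord_apply i 1
  have hcoord : ∀ i x, b₀.coord i x = b.coord 0 x * b₀.coord i v +
      b.coord 1 x * b₀.coord i q + b.coord 2 x * b₀.coord i p := fun i x =>
    (affineMap_apply_eq_sum_coord b (b₀.coord i) x).trans (Fin.sum_univ_three _)
  have hcoord₀ : ∀ x, b₀.coord 0 x = b.coord 0 x + b.coord 2 x * b₀.coord 0 p := fun x => by
    simp [hcoord 0 x, hb₀v, hb₀q]
  have hcoord₂ : ∀ x, b₀.coord 2 x = b.coord 2 x * b₀.coord 2 p := fun x => by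
    simp [hcoord 2 x, hb₀v, hb₀q]
  have hp_ne : b₀.coord 2 p ≠ 0 := fun h => by
    have hone : b₀.coord 2 p₀ = 1 := b₀.coord_apply_eq 2
    simp [hcoord₂ p₀, h] at hone
  refine ⟨b, rfl, rfl, hp, fun x hx ⟨_, hpos⟩ => (hmax x hx).not_gt ?_⟩
  have h0 : 0 < b.coord 0 x := hpos 0 (by decide)
  have h2 : 0 < b.coord 2 x := hpos 2 (by decide)
  have hp_abs : 0 < |b₀.coord 2 p| := abs_pos.2 hp_ne
  rw [hcoord₀ x, hcoord₂ x, abs_mul, abs_of_pos h2, div_lt_div_iff₀ hp_abs (by positivity)]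
  nlinarith [mul_pos h0 hp_abs]

lemma not_noCrossPair_of_mem_beyondFacet {i j k : Fin 3} (hij : i ≠ j) (hik : i ≠ k)
    (hjk : j ≠ k) (hx : x ∈ beyondFacet b i) (hz : z ∈ segment ℝ x y) (hzi : 0 < b.coord i z)
    (hzj : ∀ l ≠ i, 0 ≤ b.coord l z) : ¬ NoCrossPair s(x, y) s(b j, b k) := by
  obtain ⟨u, hu, hui, hul⟩ := exists_mem_segment_coord_eq_zero b hx hzi hzj
  have huxy : u ∈ segOf s(x, y) :=
    (convex_segment x y).segment_subset (left_mem_segment ℝ x y) hz hu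
  have huniv : Finset.univ = {i, j, k} :=
    (by decide : ∀ i j k : Fin 3, i ≠ j → i ≠ k → j ≠ k → Finset.univ = {i, j, k})
      i j k hij hik hjk
  have hsum := b.sum_coord_apply_eq_one u
  have hcomb := b.linear_combination_coord_eq_self u
  rw [huniv, Finset.sum_insert (by simp [hij, hik]), Finset.sum_pair hjk, hui, zero_add] at hsum
  rw [huniv, Finset.sum_insert (by simp [hij, hik]), Finset.sum_pair hjk, hui, zero_smul,
    zero_add] at hcomb
  have hujk : u ∈ segOf s(b j, b k) := ⟨_, _, (hul j hij.symm).le, (hul k hik.symm).le, hsum, hcomb⟩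
  intro hcross
  rcases Sym2.mem_iff.1 (hcross ⟨huxy, hujk⟩).2 with rfl | rfl
  · simpa [b.coord_apply, hjk.symm] using hul k hik.symm
  · simpa [b.coord_apply, hjk] using hul j hij.symm

/-- The triangle with vertices `b 0`, `b 1`, `b 2` without its sides at `b 1`: the part swept
out when the edge from `b 2` to `b 1` slides to `b 0`. -/
def sweptTriangle (b : AffineBasis (Fin 3) ℝ Pt) : Set Pt :=
  {z | 0 < b.coord 0 z ∧ 0 ≤ b.coord 1 z ∧ 0 < b.coord 2 z}

lemma mem_triInt_iff : z ∈ triInt (b 2) (b 1) (b 0) ↔ ∀ i, 0 < b.coord i z := by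
  have hrange : ({b 2, b 1, b 0} : Set Pt) = Set.range b := by
    ext x
    simp only [Set.mem_insert_iff, Set.mem_singleton_iff, Set.mem_range, Fin.exists_fin_succ]
    grind
  rw [triInt, hrange, b.interior_convexHull, Set.mem_ofPred_eq]

lemma triInt_subset_sweptTriangle : triInt (b 2) (b 1) (b 0) ⊆ sweptTriangle b := fun _ hz =>
  have hpos := mem_triInt_iff.1 hz
  ⟨hpos 0, (hpos 1).le, hpos 2⟩

lemma disjoint_segment_triInt : Disjoint (segment ℝ (b 2) (b 0)) (triInt (b 2) (b 1) (b 0)) :=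
  Set.disjoint_left.2 fun _ hz hzi =>
    (mem_triInt_iff.1 hzi 1).ne' (coord_eq_zero_of_mem_segment b (by decide) (by decide) hz)

lemma openSegment_subset_sweptTriangle : openSegment ℝ (b 2) (b 0) ⊆ sweptTriangle b := by
  rintro _ ⟨s, t, hs, ht, hst, rfl⟩
  simp [sweptTriangle, Convex.combo_affine_apply hst, b.coord_apply, hs, ht]

lemma eq_of_mem_segment_sweptTriangle {i j : Fin 3} (hz : z ∈ segment ℝ (b i) (b j))
    (hzb : z ∈ sweptTriangle b) : s(b i, b j) = s(b 2, b 0) := by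
  have hmem : ∀ k, b.coord k z ≠ 0 → k = i ∨ k = j := fun k hk => by
    by_contra! hne
    exact hk (coord_eq_zero_of_mem_segment b hne.1 hne.2 hz)
  have h0 := hmem 0 hzb.1.ne'
  have h2 := hmem 2 hzb.2.2.ne'
  grind

lemma disjoint_segment_sweptTriangle (hx : x ∈ beyondFacet b 1)
    (hy : y ∈ beyondFacet b 1 ∨ y = b 0 ∨ y = b 2) :
    Disjoint (segment ℝ x y) (sweptTriangle b) := by
  have hy_notMem : y ∉ sweptTriangle b := by
    rintro ⟨h0, h1, h2⟩
    rcases hy with hy | rfl | rfl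
    · exact h1.not_gt hy.1
    · simp [b.coord_apply] at h2
    · simp [b.coord_apply] at h0
  have hy_coord : b.coord 1 y ≤ 0 := by
    rcases hy with hy | rfl | rfl
    · exact hy.1.le
    · simp [b.coord_apply]
    · simp [b.coord_apply]
  refine Set.disjoint_left.2 ?_
  rintro _ ⟨s, t, hs, ht, hst, rfl⟩ hz
  rcases hs.eq_or_lt with rfl | hs
  · obtain rfl : t = 1 := by linarith
    simp only [zero_smul, one_smul, zero_add] at hz
    exact hy_notMem hz
  · have hcoord := hz.2.1
    rw [Convex.combo_affine_apply hst, smul_eq_mul, smul_eq_mul] at hcoord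
    nlinarith [mul_neg_of_pos_of_neg hs hx.1, mul_nonpos_of_nonneg_of_nonpos ht hy_coord]

end Triangle

section Tree

variable {S : Finset Pt} {E E' F : Finset (Sym2 Pt)} {v p q r x y z : Pt}

lemma NoCrossPair.symm {e f : Sym2 Pt} (h : NoCrossPair e f) : NoCrossPair f e :=
  fun _ hz => (h hz.symm).symm

lemma EdgeSlide.symm (h : EdgeSlide S E F) : EdgeSlide S F E := by
  obtain ⟨hE, hF, p, q, r, hEF, hFE, hqrE, hqrF, hempty⟩ := h
  refine ⟨hF, hE, p, r, q, hFE, hEF, Sym2.eq_swap ▸ hqrF, Sym2.eq_swap ▸ hqrE, fun g hg => ?_⟩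
  rw [triInt, Set.pair_comm r q]
  exact hempty g (Finset.union_comm F E ▸ hg)

namespace IsPST

lemma mem_left (hE : IsPST S E) (h : s(p, q) ∈ E) : p ∈ S := (hE.1 _ h).2 p (Sym2.mem_mk_left p q)

lemma mem_right (hE : IsPST S E) (h : s(p, q) ∈ E) : q ∈ S :=
  (hE.1 _ h).2 q (Sym2.mem_mk_right p q)

lemma ne (hE : IsPST S E) (h : s(p, q) ∈ E) : p ≠ q := (hE.1 _ h).1

lemma spans (hE : IsPST S E) : Spans S E := hE.2.2.2

lemma notMem_of_mem_of_mem (hE : IsPST S E) (hpq : s(p, q) ∈ E) (hqr : s(q, r) ∈ E)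
    (hpr : p ≠ r) : s(p, r) ∉ E := by
  intro hmem
  have hspans : Spans S (E.erase s(p, q)) := by
    refine hE.spans.of_erase_subset (r := r) ?_ ?_ (Finset.Subset.refl _) <;> rw [Finset.mem_erase]
    · exact ⟨fun h => hE.ne hqr (Sym2.congr_right.1 h).symm, hmem⟩
    · exact ⟨fun h => hpr (Sym2.congr_right.1 (h.trans Sym2.eq_swap)).symm, hqr⟩
  have hcard := hspans.card_le_card_add_one
    fun e he => (hE.1 e (Finset.mem_of_mem_erase he)).2
  rw [Finset.card_erase_add_one hpq, ← hE.2.2.1] at hcard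
  omega

lemma slide (hE : IsPST S E) (hpq : s(p, q) ∈ E) (hqr : s(q, r) ∈ E) (hpr : p ≠ r)
    (hcross : ∀ g ∈ E, NoCrossPair s(p, r) g) : IsPST S (slide E p q r) := by
  have hnotMem : s(p, r) ∉ E.erase s(p, q) := fun h =>
    hE.notMem_of_mem_of_mem hpq hqr hpr (Finset.mem_of_mem_erase h)
  refine ⟨fun e he => ?_, fun e he g hg heg => ?_, ?_, hE.spans.slide hqr hpr⟩
  · rcases Finset.mem_insert.1 he with rfl | he
    · exact ⟨hpr, by simp [hE.mem_left hpq, hE.mem_right hqr]⟩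
    · exact hE.1 e (Finset.mem_of_mem_erase he)
  · rcases Finset.mem_insert.1 he with rfl | he <;> rcases Finset.mem_insert.1 hg with rfl | hg
    · exact absurd rfl heg
    · exact hcross g (Finset.mem_of_mem_erase hg)
    · exact (hcross e (Finset.mem_of_mem_erase he)).symm
    · exact hE.2.1 e (Finset.mem_of_mem_erase he) g (Finset.mem_of_mem_erase hg) heg
  · rw [_root_.slide, Finset.card_insert_of_notMem hnotMem, Finset.card_erase_add_one hpq, hE.2.2.1]

lemma eq_starAt (hE : IsPST S E) (hv : v ∈ S) (hall : ∀ w ∈ S, w ≠ v → s(v, w) ∈ E) :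
    E = starAt S v := by
  refine (Finset.eq_of_subset_of_card_le (fun e he => ?_) ?_).symm
  · obtain ⟨w, hw, rfl⟩ := Finset.mem_image.1 he
    exact hall w (Finset.mem_of_mem_erase hw) (Finset.ne_of_mem_erase hw)
  · rw [starAt, Finset.card_image_of_injective _ fun _ _ h => Sym2.congr_right.1 h,
      Finset.card_erase_of_mem hv, ← hE.2.2.1, Nat.add_sub_cancel]

variable {b : AffineBasis (Fin 3) ℝ Pt}

lemma endpoint_mem_of_mem_sweptTriangle (hE : IsPST S E) (hS : ConvexPos S) (hb : ∀ i, b i ∈ S)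
    (h21 : s(b 2, b 1) ∈ E) (h10 : s(b 1, b 0) ∈ E) (hxy : s(x, y) ∈ E)
    (hz : z ∈ segment ℝ x y) (hzb : z ∈ sweptTriangle b) :
    x ∈ beyondFacet b 1 ∨ ∃ i, x = b i := by
  by_contra! hx
  obtain ⟨i, hi⟩ := hS.exists_mem_beyondFacet hb (hE.mem_left hxy) hx.2
  obtain ⟨h0, h1, h2⟩ := hzb
  have hz_nonneg : ∀ l, 0 ≤ b.coord l z := by
    simp [Fin.forall_fin_succ, h0.le, h1, h2.le]
  have hne : ∀ j k, s(x, y) ≠ s(b j, b k) := fun j k h =>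
    (Sym2.mem_iff.1 (h ▸ Sym2.mem_mk_left x y)).elim (hx.2 j) (hx.2 k)
  fin_cases i
  · exact not_noCrossPair_of_mem_beyondFacet (by decide) (by decide) (by decide) hi hz h0
      (fun l _ => hz_nonneg l) (hE.2.1 _ hxy _ h21 (hne 2 1))
  · exact hx.1 hi
  · exact not_noCrossPair_of_mem_beyondFacet (by decide) (by decide) (by decide) hi hz h2
      (fun l _ => hz_nonneg l) (hE.2.1 _ hxy _ h10 (hne 1 0))

lemma disjoint_segOf_sweptTriangle (hE : IsPST S E) (hS : ConvexPos S) (h21 : s(b 2, b 1) ∈ E)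
    (h10 : s(b 1, b 0) ∈ E) (hclosest : ∀ x ∈ beyondFacet b 1, s(b 1, x) ∉ E) {g : Sym2 Pt}
    (hg : g ∈ E) : Disjoint (segOf g) (sweptTriangle b) := by
  have hb : ∀ i, b i ∈ S := by
    simp [Fin.forall_fin_succ, hE.mem_right h10, hE.mem_right h21, hE.mem_left h21]
  have h20 : s(b 2, b 0) ∉ E :=
    hE.notMem_of_mem_of_mem h21 h10 (b.ind.injective.ne (by decide))
  induction g with
  | _ x y =>
    by_contra hmeet
    obtain ⟨z, hz, hzb⟩ := Set.not_disjoint_iff.1 hmeet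
    have hvertex : ∀ {u i}, u ∈ beyondFacet b 1 → s(u, b i) ∈ E → b i = b 0 ∨ b i = b 2 := by
      intro u i hu hui
      fin_cases i
      · exact .inl rfl
      · exact absurd (Sym2.eq_swap ▸ hui) (hclosest u hu)
      · exact .inr rfl
    have hx_cases := hE.endpoint_mem_of_mem_sweptTriangle hS hb h21 h10 hg hz hzb
    have hy_cases := hE.endpoint_mem_of_mem_sweptTriangle hS hb h21 h10 (Sym2.eq_swap ▸ hg)
      (segment_symm ℝ x y ▸ hz) hzb
    rcases hx_cases with hx | ⟨i, rfl⟩ <;> rcases hy_cases with hy | ⟨j, rfl⟩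
    · exact hmeet (disjoint_segment_sweptTriangle hx (.inl hy))
    · exact hmeet (disjoint_segment_sweptTriangle hx (.inr (hvertex hx hg)))
    · rw [Sym2.eq_swap] at hg hmeet
      exact hmeet (disjoint_segment_sweptTriangle hy (.inr (hvertex hy hg)))
    · exact h20 (eq_of_mem_segment_sweptTriangle hz hzb ▸ hg)

lemma noCrossPair_of_disjoint_sweptTriangle (hE : IsPST S E) (hS : ConvexPos S) (h0 : b 0 ∈ S)
    (h2 : b 2 ∈ S) {g : Sym2 Pt} (hg : g ∈ E) (hdisj : Disjoint (segOf g) (sweptTriangle b)) :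
    NoCrossPair s(b 2, b 0) g := by
  rintro z ⟨hz, hzg⟩
  have hzg_of_mem : z ∈ S → z ∈ g := fun hzS => hS.mem_of_mem_segOf hzS (hE.1 g hg).2 hzg
  change z ∈ segment ℝ (b 2) (b 0) at hz
  rw [← insert_endpoints_openSegment] at hz
  rcases hz with rfl | rfl | hz
  · exact ⟨Sym2.mem_mk_left _ _, hzg_of_mem h2⟩
  · exact ⟨Sym2.mem_mk_right _ _, hzg_of_mem h0⟩
  · exact (Set.disjoint_left.1 hdisj hzg (openSegment_subset_sweptTriangle hz)).elim

lemma edgeSlide_slide (hE : IsPST S E) (hS : ConvexPos S) (h21 : s(b 2, b 1) ∈ E)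
    (h10 : s(b 1, b 0) ∈ E) (hclosest : ∀ x ∈ beyondFacet b 1, s(b 1, x) ∉ E) :
    EdgeSlide S E (_root_.slide E (b 2) (b 1) (b 0)) := by
  have h20 : b 2 ≠ b 0 := b.ind.injective.ne (by decide)
  have hdisj : ∀ g ∈ E, Disjoint (segOf g) (sweptTriangle b) := fun g hg =>
    hE.disjoint_segOf_sweptTriangle hS h21 h10 hclosest hg
  have hcross : ∀ g ∈ E, NoCrossPair s(b 2, b 0) g := fun g hg =>
    hE.noCrossPair_of_disjoint_sweptTriangle hS (hE.mem_right h10) (hE.mem_left h21) hg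
      (hdisj g hg)
  refine ⟨hE, hE.slide h21 h10 h20 hcross, b 2, b 1, b 0, sdiff_slide h21 (hE.ne h10),
    slide_sdiff (hE.notMem_of_mem_of_mem h21 h10 h20), h10, mem_slide_of_mem h10 h20,
    fun g hg => ?_⟩
  obtain rfl | hgE : g = s(b 2, b 0) ∨ g ∈ E := by
    simp only [_root_.slide, Finset.mem_union, Finset.mem_insert, Finset.mem_erase] at hg
    tauto
  · exact disjoint_segment_triInt
  · exact (hdisj g hgE).mono_right triInt_subset_sweptTriangle

lemma eq_starAt_or_exists_edgeSlide (hE : IsPST S E) (hS : ConvexPos S) (hv : v ∈ S) :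
    E = starAt S v ∨
      ∃ F, EdgeSlide S E F ∧ nonincidentCount F v + 1 = nonincidentCount E v := by
  by_cases hall : ∀ w ∈ S, w ≠ v → s(v, w) ∈ E
  · exact .inl (hE.eq_starAt hv hall)
  right
  push Not at hall
  obtain ⟨w, hw, hwv, hvw⟩ := hall
  obtain ⟨q, p, hvq, hqp, hpv⟩ := exists_rel_rel_ne_of_not_rel (hE.spans v hv w hw) hwv hvw
  obtain ⟨b, rfl, rfl, hb2, hclosest⟩ :=
    exists_affineBasis_disjoint_beyondFacet (v := v) (q := q)
      (N := S.filter fun x => s(q, x) ∈ E ∧ x ≠ v)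
      ⟨p, Finset.mem_filter.2 ⟨hE.mem_right hqp, hqp, hpv⟩⟩ fun x hx =>
        have ⟨hxS, hqx, hxv⟩ := Finset.mem_filter.1 hx
        hS.affineIndependent hv (hE.mem_right hvq) hxS (hE.ne hvq) hxv.symm (hE.ne hqx)
  obtain ⟨-, h12, h20⟩ := Finset.mem_filter.1 hb2
  have h21 : s(b 2, b 1) ∈ E := Sym2.eq_swap ▸ h12
  have h10 : s(b 1, b 0) ∈ E := Sym2.eq_swap ▸ hvq
  refine ⟨_, hE.edgeSlide_slide hS h21 h10 fun x hx h1x => ?_,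
    nonincidentCount_slide_add_one h21 h20 (hE.ne h10)⟩
  refine hclosest x (Finset.mem_filter.2 ⟨hE.mem_right h1x, h1x, ?_⟩) hx
  rintro rfl
  simpa [b.coord_apply] using hx.1

lemma reachesIn_starAt (hE : IsPST S E) (hS : ConvexPos S) (hv : v ∈ S) :
    ReachesIn (EdgeSlide S) (nonincidentCount E v) E (starAt S v) := by
  induction hn : nonincidentCount E v generalizing E with
  | zero =>
    rcases hE.eq_starAt_or_exists_edgeSlide hS hv with rfl | ⟨F, -, hcount⟩
    · exact .refl _ _
    · omega
  | succ n ih =>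
    rcases hE.eq_starAt_or_exists_edgeSlide hS hv with rfl | ⟨F, hslide, hcount⟩
    · exact .refl _ _
    · exact .head hslide (ih hslide.2.1 (by omega))

lemma exists_nonincidentCount_add_le (hE : IsPST S E) (hE' : IsPST S E') :
    ∃ v ∈ S, nonincidentCount E v + nonincidentCount E' v ≤
      2 * ((S.card - 1) * (S.card - 2)) / S.card := by
  have hS : 0 < S.card := hE.2.2.1 ▸ Nat.succ_pos _
  obtain ⟨v, hv, hmin⟩ := S.exists_min_image
    (fun v => nonincidentCount E v + nonincidentCount E' v) (Finset.card_pos.1 hS)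
  refine ⟨v, hv, (Nat.le_div_iff_mul_le hS).2 ?_⟩
  have hcard : E.card = S.card - 1 := Nat.eq_sub_of_add_eq hE.2.2.1
  have hcard' : E'.card = S.card - 1 := Nat.eq_sub_of_add_eq hE'.2.2.1
  calc (nonincidentCount E v + nonincidentCount E' v) * S.card
      = S.card • (nonincidentCount E v + nonincidentCount E' v) := by rw [smul_eq_mul, mul_comm]
    _ ≤ ∑ w ∈ S, (nonincidentCount E w + nonincidentCount E' w) :=
        Finset.card_nsmul_le_sum S _ _ hmin
    _ = 2 * ((S.card - 1) * (S.card - 2)) := by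
        rw [Finset.sum_add_distrib, sum_nonincidentCount hE.1, sum_nonincidentCount hE'.1, hcard,
          hcard', two_mul]

end IsPST

end Tree

lemma two_mul_pred_mul_pred_pred_div_le (n : ℕ) :
    2 * ((n - 1) * (n - 2)) / n ≤ 2 * n - 5 := by
  rcases lt_or_ge n 3 with hn | hn
  · interval_cases n <;> simp
  obtain ⟨k, rfl⟩ := Nat.exists_eq_add_of_le' hn
  have hlt : 2 * ((k + 2) * (k + 1)) < (2 * k + 2) * (k + 3) := by nlinarith
  have hdiv := (Nat.div_lt_iff_lt_mul (by omega)).2 hlt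
  simp only [show k + 3 - 1 = k + 2 by omega, show k + 3 - 2 = k + 1 by omega]
  omega

-- For `5 ≤ n` the bound is `2 * n - 6`, since `2 (n - 1) (n - 2) = (2 n - 6) n + 4`.
theorem stmt_8_general {S : Finset Pt} {E E' : Finset (Sym2 Pt)} (hS : ConvexPos S)
    (hE : IsPST S E) (hE' : IsPST S E') :
    ReachesIn (EdgeSlide S) (2 * ((S.card - 1) * (S.card - 2)) / S.card) E E' := by
  obtain ⟨v, hv, hle⟩ := hE.exists_nonincidentCount_add_le hE'
  have hto : ReachesIn (EdgeSlide S) (nonincidentCount E v) E (starAt S v) :=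
    hE.reachesIn_starAt hS hv
  have hfrom : ReachesIn (EdgeSlide S) (nonincidentCount E' v) (starAt S v) E' :=
    (hE'.reachesIn_starAt hS hv).symm fun _ _ => EdgeSlide.symm
  exact (hto.trans hfrom).mono hle

/-- on `n` points in convex position, any two trees are connected by at most
`2n - 5` edge slides. -/
theorem stmt_8 :
    ∀ S : Finset Pt, ConvexPos S →
      ∀ E E' : Finset (Sym2 Pt), IsPST S E → IsPST S E' →
        ReachesIn (EdgeSlide S) (2 * S.card - 5) E E' :=
  fun _ hS _ _ hE hE' => (stmt_8_general hS hE hE').mono (two_mul_pred_mul_pred_pred_div_le _)
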